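/- Let n ≥ 2 and q ≥ 1 be integers and ξ a real number. For t = 0, 1, …, n+q−3 define the q×q real matrix B(t) = I_q + ξ·Σ_{i=1}^{q−1} χ(i ≤ t ≤ i+n−2)·e_{i+1}e_iᵀ. Then the ordered product Π = B(n+q−3)·B(n+q−4)···B(0) is lower triangular with Π_{i,i} = 1 for all i, Π_{i,j} = 0 for i < j, and Π_{i,j} = ξ^{i−j}·C(i−j+n−2, n−2) for i > j, where C(a,b) denotes the binomial coefficient. -/

import Mathlib

/-- The standard basis vectors of `ℝ^q`, numbered `1, …, q` (with `e 0 = 0` and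
`e j = 0` for `j > q` by convention). -/
noncomputable def eVec (q : ℕ) (j : ℕ) : Fin q → ℝ :=
  if h : 1 ≤ j ∧ j ≤ q then Pi.single (⟨j - 1, by omega⟩ : Fin q) 1 else 0

/-- The matrix `B(t) = I_q + ξ Σ_{i=1}^{q-1} χ(i ≤ t ≤ i+n-2) e_{i+1} e_iᵀ`. -/
noncomputable def Bmat (n q : ℕ) (ξ : ℝ) (t : ℕ) : Matrix (Fin q) (Fin q) ℝ :=
  1 + ξ • ∑ i ∈ Finset.Icc 1 (q - 1),
    (if i ≤ t ∧ t ≤ i + n - 2 then (1 : ℝ) else 0) •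
      Matrix.vecMulVec (eVec q (i + 1)) (eVec q i)

/-- The ordered (time-decreasing) product `B(T-1) ⬝ B(T-2) ⬝ ⋯ ⬝ B(0)`. -/
noncomputable def prodRev {q : ℕ} (B : ℕ → Matrix (Fin q) (Fin q) ℝ) :
    ℕ → Matrix (Fin q) (Fin q) ℝ
  | 0 => 1
  | t + 1 => B t * prodRev B t

theorem eVec_apply (q j : ℕ) (a : Fin q) :
    eVec q j a = if (a : ℕ) + 1 = j then 1 else 0 := by
  have ha := a.isLt
  unfold eVec
  split_ifs with h h' h'
  · have : a = ⟨j - 1, by omega⟩ := Fin.ext (by simp; omega)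
    rw [← this, Pi.single_eq_same]
  · exact Pi.single_eq_of_ne (fun h'' => h' (by rw [h'']; simp; omega)) _
  · omega
  · rfl

/-- With rows and columns numbered from `0`, `B(t)` has a unit diagonal and the entry
`χ(a ≤ t ≤ a + n - 2) ξ` just below the diagonal in row `a`. -/
theorem Bmat_apply (n q : ℕ) (ξ : ℝ) (t : ℕ) (a b : Fin q) :
    Bmat n q ξ t a b = (if a = b then 1 else 0) +
      if (b : ℕ) + 1 = a ∧ (a : ℕ) ≤ t ∧ t ≤ a + n - 2 then ξ else 0 := by
  have ha := a.isLt
  have hsum : ∀ i ∈ Finset.Icc 1 (q - 1),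
      (if i ≤ t ∧ t ≤ i + n - 2 then (1 : ℝ) else 0) * (eVec q (i + 1) a * eVec q i b) =
        if i = (a : ℕ) then
          (if (b : ℕ) + 1 = a ∧ (a : ℕ) ≤ t ∧ t ≤ a + n - 2 then 1 else 0) else 0 := by
    intro i _
    rw [eVec_apply, eVec_apply]
    by_cases hi : i = (a : ℕ)
    · subst hi
      simp [← ite_and]
    · simp [hi, Ne.symm hi]
  simp only [Bmat, Matrix.add_apply, Matrix.smul_apply, Matrix.sum_apply, Matrix.one_apply,
    Matrix.vecMulVec_apply, smul_eq_mul]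
  rw [Finset.sum_congr rfl hsum, Finset.sum_ite_eq']
  congr 1
  split_ifs with h₁ h₂ h₂ <;> simp_all
  omega

theorem Bmat_mul_apply_of_val_eq_zero (n q : ℕ) (ξ : ℝ) (t : ℕ)
    (M : Matrix (Fin q) (Fin q) ℝ) (a j : Fin q) (ha : (a : ℕ) = 0) :
    (Bmat n q ξ t * M) a j = M a j := by
  simp [Matrix.mul_apply, Bmat_apply, ha]

theorem Bmat_mul_apply_of_val_eq_succ (n q : ℕ) (ξ : ℝ) (t : ℕ)
    (M : Matrix (Fin q) (Fin q) ℝ) (a b j : Fin q) (hab : (b : ℕ) + 1 = a) :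
    (Bmat n q ξ t * M) a j =
      M a j + if (a : ℕ) ≤ t ∧ t ≤ a + n - 2 then ξ * M b j else 0 := by
  have hb : ∀ c : Fin q, (c : ℕ) + 1 = a ↔ c = b := fun c => by
    rw [Fin.ext_iff]; omega
  simp [Matrix.mul_apply, Bmat_apply, hb, add_mul, Finset.sum_add_distrib, ite_and]

/-- The entries of the partial products `B(T-1)⋯B(0)`: entry `(i, j)` counts the weakly
increasing sequences of length `i - j` in a set of `min (n - 1) (T - i)` elements. -/
theorem prodRev_Bmat_apply (n q : ℕ) (hn : 2 ≤ n) (ξ : ℝ) (T : ℕ) (i j : Fin q) :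
    prodRev (Bmat n q ξ) T i j =
      if (j : ℕ) ≤ i then
        ξ ^ ((i : ℕ) - j) * (Nat.multichoose (min (n - 1) (T - i)) ((i : ℕ) - j) : ℝ)
      else 0 := by
  induction T generalizing i with
  | zero =>
    rw [prodRev, Matrix.one_apply]
    rcases lt_trichotomy (i : ℕ) j with h | h | h
    · rw [if_neg (by rw [Fin.ext_iff]; omega), if_neg (by omega)]
    · simp [Fin.ext h]
    · obtain ⟨d, hd⟩ : ∃ d, (i : ℕ) - j = d + 1 := ⟨i - j - 1, by omega⟩
      rw [if_neg (by rw [Fin.ext_iff]; omega), if_pos h.le, hd]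
      simp
  | succ T ih =>
    rw [prodRev]
    rcases Nat.eq_zero_or_pos (i : ℕ) with hi | hi
    · rw [Bmat_mul_apply_of_val_eq_zero _ _ _ _ _ _ _ hi, ih]
      simp [hi]
    · obtain ⟨b, hb⟩ : ∃ b : Fin q, (b : ℕ) + 1 = i :=
        ⟨⟨i - 1, by omega⟩, Nat.sub_add_cancel hi⟩
      rw [Bmat_mul_apply_of_val_eq_succ _ _ _ _ _ _ _ _ hb, ih, ih]
      by_cases ht : (i : ℕ) ≤ T ∧ T ≤ i + n - 2
      · rw [if_pos ht]
        rcases lt_trichotomy (i : ℕ) j with h | h | h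
        · rw [if_neg (by omega), if_neg (by omega), if_neg (by omega)]
          simp
        · rw [if_pos h.ge, if_neg (by omega), if_pos h.ge]
          simp [h]
        · rw [if_pos h.le, if_pos (by omega), if_pos h.le]
          obtain ⟨d, hd⟩ : ∃ d, (b : ℕ) - j = d := ⟨_, rfl⟩
          have hd' : (i : ℕ) - j = d + 1 := by omega
          rw [hd, hd', show min (n - 1) (T - (i : ℕ)) = T - i by omega,
            show min (n - 1) (T - (b : ℕ)) = T - i + 1 by omega,
            show min (n - 1) (T + 1 - (i : ℕ)) = T - i + 1 by omega,
            Nat.multichoose_succ_succ]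
          push_cast
          ring
      · rw [if_neg ht, add_zero,
          show min (n - 1) (T + 1 - (i : ℕ)) = min (n - 1) (T - i) by omega]

/-- The product `Π = B(n+q-3)⋯B(0)` is lower triangular, with unit diagonal and
`Π_{i,j} = ξ^{i-j} C(i-j+n-2, n-2)` below the diagonal. Rows and columns of
`Fin q` are numbered from `0`, corresponding to indices `1, …, q` of the paper. -/
theorem B_product_entries
    (n q : ℕ) (hn : 2 ≤ n) (hq : 1 ≤ q) (ξ : ℝ) :
    ∀ i j : Fin q,
      (i = j → prodRev (Bmat n q ξ) (n + q - 2) i j = 1) ∧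
      ((i : ℕ) < (j : ℕ) → prodRev (Bmat n q ξ) (n + q - 2) i j = 0) ∧
      ((j : ℕ) < (i : ℕ) → prodRev (Bmat n q ξ) (n + q - 2) i j =
        ξ ^ ((i : ℕ) - (j : ℕ)) *
          (Nat.choose ((i : ℕ) - (j : ℕ) + n - 2) (n - 2) : ℝ)) := by
  intro i j
  have hi := i.isLt
  rw [prodRev_Bmat_apply n q hn, show min (n - 1) (n + q - 2 - (i : ℕ)) = n - 1 by omega]
  refine ⟨fun h => by simp [h], fun h => if_neg (by omega), fun h => ?_⟩
  rw [if_pos h.le, Nat.multichoose_eq,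
    show n - 1 + ((i : ℕ) - j) - 1 = (i : ℕ) - j + (n - 2) by omega,
    show (i : ℕ) - j + n - 2 = (i : ℕ) - j + (n - 2) by omega, Nat.choose_symm_add]
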